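/- Geometric-weight comparison of momentum and gradient sums. If 0 < β₁ < β₂^{1/4}, 0 < β₂ < 1, and a₀ > 0, then for every T ≥ 1: Σ_{t=1}^T b_t²/√(a_t) ≤ ( (1−β₁)² / (1 − β₁/β₂^{1/4})² ) · Σ_{t=1}^T c_t²/√(a_t). -/

import Mathlib

/-!
Write `q = β₂ ^ (1/4)` and `r = |β₁| / q < 1`. The second-moment recursion gives
`√a (t + 1) ≥ q ^ 2 * √a t`. Convexity of the square, with weights `r` and `1 - r`, then shows that
`u t = ‖b t‖ ^ 2 / √a t` contracts up to a forcing term: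
`u (t + 1) ≤ r * u t + (1 - β₁) ^ 2 / (1 - r) * (‖c (t + 1)‖ ^ 2 / √a (t + 1))`.
Summing over `t` moves `r * ∑ u` to the left and produces the second factor `1 / (1 - r)`.
-/

theorem one_sub_mul_sum_Icc_add_le {R : Type*} [CommRing R] [PartialOrder R] [IsOrderedRing R]
    {r : R} {u v : ℕ → R} (h : ∀ t, u (t + 1) ≤ r * u t + v (t + 1)) (T : ℕ) :
    (1 - r) * ∑ t ∈ Finset.Icc 1 T, u t + r * u T ≤ r * u 0 + ∑ t ∈ Finset.Icc 1 T, v t := by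
  induction T with
  | zero => simp
  | succ T ih =>
    rw [Finset.sum_Icc_succ_top (by lia), Finset.sum_Icc_succ_top (by lia)]
    calc (1 - r) * (∑ t ∈ Finset.Icc 1 T, u t + u (T + 1)) + r * u (T + 1)
        = (1 - r) * ∑ t ∈ Finset.Icc 1 T, u t + u (T + 1) := by ring
      _ ≤ (1 - r) * ∑ t ∈ Finset.Icc 1 T, u t + (r * u T + v (T + 1)) := by gcongr; exact h T
      _ = ((1 - r) * ∑ t ∈ Finset.Icc 1 T, u t + r * u T) + v (T + 1) := by ring
      _ ≤ (r * u 0 + ∑ t ∈ Finset.Icc 1 T, v t) + v (T + 1) := by gcongr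
      _ = r * u 0 + (∑ t ∈ Finset.Icc 1 T, v t + v (T + 1)) := by ring

theorem pos_of_mul_le_succ {R : Type*} [Semiring R] [PartialOrder R] [IsStrictOrderedRing R]
    {ρ : R} {a : ℕ → R} (hρ : 0 < ρ) (h0 : 0 < a 0) (h : ∀ t, ρ * a t ≤ a (t + 1)) (t : ℕ) :
    0 < a t := by
  induction t with
  | zero => exact h0
  | succ t ih => exact (mul_pos hρ ih).trans_le (h t)

theorem rpow_one_div_four_sq_mul_sqrt_le {ρ x y : ℝ} (hρ : 0 ≤ ρ) (h : ρ * x ≤ y) :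
    (ρ ^ ((1 : ℝ) / 4)) ^ 2 * √x ≤ √y := by
  have hsq : (ρ ^ ((1 : ℝ) / 4)) ^ 2 = √ρ := by
    rw [Real.sqrt_eq_rpow, ← Real.rpow_mul_natCast hρ]
    norm_num
  calc (ρ ^ ((1 : ℝ) / 4)) ^ 2 * √x = √(ρ * x) := by rw [hsq, Real.sqrt_mul hρ]
    _ ≤ √y := Real.sqrt_le_sqrt h

section NormedSpace

variable {E : Type*} [SeminormedAddCommGroup E] [NormedSpace ℝ E] {β γ q : ℝ}

theorem norm_smul_add_smul_sq_le (hβ : |β| < q) (x y : E) :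
    ‖β • x + γ • y‖ ^ 2 ≤ |β| / q * (q * ‖x‖) ^ 2 + γ ^ 2 / (1 - |β| / q) * ‖y‖ ^ 2 := by
  have hq : 0 < q := (abs_nonneg β).trans_lt hβ
  set r := |β| / q with hr
  have hr0 : 0 ≤ r := by positivity
  have hr1 : 0 < 1 - r := sub_pos.2 ((div_lt_one hq).2 hβ)
  have triangle : ‖β • x + γ • y‖ ≤ r * (q * ‖x‖) + (1 - r) * (|γ| * ‖y‖ / (1 - r)) :=
    calc ‖β • x + γ • y‖ ≤ |β| * ‖x‖ + |γ| * ‖y‖ := by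
          simpa only [norm_smul, Real.norm_eq_abs] using norm_add_le (β • x) (γ • y)
      _ = r * (q * ‖x‖) + (1 - r) * (|γ| * ‖y‖ / (1 - r)) := by
          rw [mul_div_cancel₀ _ hr1.ne', ← mul_assoc, hr, div_mul_cancel₀ _ hq.ne']
  calc ‖β • x + γ • y‖ ^ 2
      ≤ (r * (q * ‖x‖) + (1 - r) * (|γ| * ‖y‖ / (1 - r))) ^ 2 := by gcongr
    _ ≤ r * (q * ‖x‖) ^ 2 + (1 - r) * (|γ| * ‖y‖ / (1 - r)) ^ 2 :=
        even_two.convexOn_pow.2 trivial trivial hr0 hr1.le (add_sub_cancel r 1)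
    _ = r * (q * ‖x‖) ^ 2 + γ ^ 2 / (1 - r) * ‖y‖ ^ 2 := by
        rw [div_pow, mul_pow |γ|, sq_abs]
        field_simp

theorem norm_smul_add_smul_sq_div_le {s s' : ℝ} (hβ : |β| < q) (hs : 0 < s)
    (hss' : q ^ 2 * s ≤ s') (x y : E) :
    ‖β • x + γ • y‖ ^ 2 / s' ≤
      |β| / q * (‖x‖ ^ 2 / s) + γ ^ 2 / (1 - |β| / q) * (‖y‖ ^ 2 / s') := by
  have hq : 0 < q := (abs_nonneg β).trans_lt hβ
  have hs' : 0 < s' := (by positivity : 0 < q ^ 2 * s).trans_le hss'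
  have weight_decay : (q * ‖x‖) ^ 2 / s' ≤ ‖x‖ ^ 2 / s :=
    calc (q * ‖x‖) ^ 2 / s' ≤ (q * ‖x‖) ^ 2 / (q ^ 2 * s) := by gcongr
      _ = ‖x‖ ^ 2 / s := by rw [mul_pow, mul_div_mul_left _ _ (pow_ne_zero 2 hq.ne')]
  calc ‖β • x + γ • y‖ ^ 2 / s'
      ≤ (|β| / q * (q * ‖x‖) ^ 2 + γ ^ 2 / (1 - |β| / q) * ‖y‖ ^ 2) / s' := by
        gcongr
        exact norm_smul_add_smul_sq_le hβ x y
    _ = |β| / q * ((q * ‖x‖) ^ 2 / s') + γ ^ 2 / (1 - |β| / q) * (‖y‖ ^ 2 / s') := by ring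
    _ ≤ |β| / q * (‖x‖ ^ 2 / s) + γ ^ 2 / (1 - |β| / q) * (‖y‖ ^ 2 / s') := by gcongr

theorem sum_norm_sq_div_le_of_smul_add_smul {s : ℕ → ℝ} {b c : ℕ → E} (hβ : |β| < q)
    (hs : ∀ t, 0 < s t) (hs_succ : ∀ t, q ^ 2 * s t ≤ s (t + 1)) (hb0 : b 0 = 0)
    (hb : ∀ t, b (t + 1) = β • b t + γ • c (t + 1)) (T : ℕ) :
    ∑ t ∈ Finset.Icc 1 T, ‖b t‖ ^ 2 / s t ≤
      γ ^ 2 / (1 - |β| / q) ^ 2 * ∑ t ∈ Finset.Icc 1 T, ‖c t‖ ^ 2 / s t := by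
  have hq : 0 < q := (abs_nonneg β).trans_lt hβ
  have hr : 0 < 1 - |β| / q := sub_pos.2 ((div_lt_one hq).2 hβ)
  have contraction (t : ℕ) : ‖b (t + 1)‖ ^ 2 / s (t + 1) ≤ |β| / q * (‖b t‖ ^ 2 / s t) +
      γ ^ 2 / (1 - |β| / q) * (‖c (t + 1)‖ ^ 2 / s (t + 1)) := by
    rw [hb]
    exact norm_smul_add_smul_sq_div_le hβ (hs t) (hs_succ t) (b t) (c (t + 1))
  have last_nonneg : 0 ≤ |β| / q * (‖b T‖ ^ 2 / s T) := by
    have := hs T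
    positivity
  have summed : (1 - |β| / q) * ∑ t ∈ Finset.Icc 1 T, ‖b t‖ ^ 2 / s t ≤
      γ ^ 2 / (1 - |β| / q) * ∑ t ∈ Finset.Icc 1 T, ‖c t‖ ^ 2 / s t := by
    refine (le_add_of_nonneg_right last_nonneg).trans ?_
    simpa [hb0, Finset.mul_sum] using one_sub_mul_sum_Icc_add_le
      (u := fun t ↦ ‖b t‖ ^ 2 / s t)
      (v := fun t ↦ γ ^ 2 / (1 - |β| / q) * (‖c t‖ ^ 2 / s t)) contraction T
  rw [sq (1 - |β| / q), ← div_div, div_mul_eq_mul_div, le_div_iff₀' hr]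
  exact summed

theorem geometric_weight_momentum_gradient_comparison_general {β₁ β₂ : ℝ}
    (hβ₁β₂ : |β₁| < β₂ ^ ((1 : ℝ) / 4)) (hβ₂0 : 0 < β₂) (hβ₂1 : β₂ ≤ 1)
    {a : ℕ → ℝ} {b c : ℕ → E} (ha0 : 0 < a 0) (hb0 : b 0 = 0)
    (ha : ∀ t, a (t + 1) = β₂ * a t + (1 - β₂) * ‖c (t + 1)‖ ^ 2)
    (hb : ∀ t, b (t + 1) = β₁ • b t + (1 - β₁) • c (t + 1)) (T : ℕ) :
    ∑ t ∈ Finset.Icc 1 T, ‖b t‖ ^ 2 / √(a t) ≤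
      (1 - β₁) ^ 2 / (1 - |β₁| / β₂ ^ ((1 : ℝ) / 4)) ^ 2 *
        ∑ t ∈ Finset.Icc 1 T, ‖c t‖ ^ 2 / √(a t) := by
  have ha_succ (t : ℕ) : β₂ * a t ≤ a (t + 1) := by
    rw [ha]
    exact le_add_of_nonneg_right (mul_nonneg (sub_nonneg.2 hβ₂1) (sq_nonneg _))
  have ha_pos : ∀ t, 0 < a t := pos_of_mul_le_succ hβ₂0 ha0 ha_succ
  exact sum_norm_sq_div_le_of_smul_add_smul hβ₁β₂ (fun t ↦ Real.sqrt_pos.2 (ha_pos t))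
    (fun t ↦ rpow_one_div_four_sq_mul_sqrt_le hβ₂0.le (ha_succ t)) hb0 hb T

end NormedSpace

/-- Geometric-weight comparison of momentum and gradient sums. If `0 < β₁ < β₂^{1/4}`,
`0 < β₂ < 1`, and `a₀ > 0`, then for every `T ≥ 1`,
`Σ_{t=1}^T b_t²/√a_t ≤ ((1−β₁)²/(1 − β₁/β₂^{1/4})²) · Σ_{t=1}^T c_t²/√a_t`. -/
theorem geometric_weight_momentum_gradient_comparison
    (β₁ β₂ : ℝ) (hβ₁0 : 0 < β₁) (hβ₁β₂ : β₁ < β₂ ^ ((1 : ℝ) / 4))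
    (hβ₂0 : 0 < β₂) (hβ₂1 : β₂ < 1)
    (a b c : ℕ → ℝ) (hc : ∀ t, 1 ≤ t → 0 ≤ c t) (ha0 : 0 < a 0) (hb0 : b 0 = 0)
    (ha : ∀ t, 1 ≤ t → a t = β₂ * a (t - 1) + (1 - β₂) * (c t) ^ 2)
    (hb : ∀ t, 1 ≤ t → b t = β₁ * b (t - 1) + (1 - β₁) * c t) :
    ∀ T : ℕ, 1 ≤ T →
      ∑ t ∈ Finset.Icc 1 T, (b t) ^ 2 / Real.sqrt (a t)
        ≤ ((1 - β₁) ^ 2 / (1 - β₁ / β₂ ^ ((1 : ℝ) / 4)) ^ 2)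
            * ∑ t ∈ Finset.Icc 1 T, (c t) ^ 2 / Real.sqrt (a t) := by
  intro T _
  have hβ₁ : |β₁| = β₁ := abs_of_pos hβ₁0
  simpa only [Real.norm_eq_abs, sq_abs, hβ₁] using
    geometric_weight_momentum_gradient_comparison_general (hβ₁.trans_lt hβ₁β₂) hβ₂0 hβ₂1.le ha0 hb0
      (fun t ↦ by simpa using ha (t + 1) t.succ_pos) (fun t ↦ hb (t + 1) t.succ_pos) T
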